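/- Let φ be a bijective outmap that is a USO of the full face [∅,{1,…,n}] of the standard n-cube. Then φ⁻¹ is a border USO of the full face [∅,{1,…,n}] if and only if the following condition holds for all pairs of distinct vertices U, V ⊆ {1,…,n}: if U ∆ V ⊆ φ(U) ∆ φ(V), then |U ∆ V| is odd. -/

import Mathlib

/-!
The proof rests on the Szabó–Welzl criterion (`isUSO_iff`): an outmap is a USO iff any two distinct
vertices `U`, `V` are separated, i.e. `(U ∆ V) ∩ (φ U ∆ φ V) ≠ ∅`. As this is symmetric in vertices
and outmap values, the inverse of a bijective USO is again a USO.

In a PUSO of a cube `[∅, M]`, all pairs of distinct non-antipodal vertices are separated, since they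
span a proper face, while some antipodal pair shares its outmap value. Call a value doubled if an
antipodal pair shares it, and missed if no vertex has it. Looking at the two facets in direction `i`
shows that if `T` is doubled then `T ∆ {i}` is missed and vice versa. Hence all outmap values have
the same parity and antipodal vertices always have equal outmaps (`IsPUSO.even_symmDiff`,
`IsPUSO.antipodal`).

A PUSO extending a USO `ψ` of `[∅, N]` to `[∅, insert m N]` is therefore determined by `ψ` up to the
choice of parity. Applying separation to `U` and the antipode of `V`, for distinct `U, V ⊆ N`, such
an extension exists iff `ψ U ∆ ψ V ⊆ U ∆ V` implies that `|ψ U ∆ ψ V|` is odd (`border_iff`). For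
`ψ = φ⁻¹` this is the claimed condition after substituting `φ U`, `φ V` for `U`, `V`.
-/

open Finset
open scoped symmDiff

/-- `V` is a sink of the face `[A,B]` of the standard cube (vertices are subsets
of `{1,…,n}`) under the outmap `φ`: `V` belongs to the face and `φ V` has no
coordinate in the carrier `B \ A`. -/
def IsSink (φ : Finset ℕ → Finset ℕ) (A B V : Finset ℕ) : Prop :=
  A ⊆ V ∧ V ⊆ B ∧ φ V ∩ (B \ A) = ∅

/-- The face `[A,B]` has exactly one sink under `φ`. -/
def HasUniqueSink (φ : Finset ℕ → Finset ℕ) (A B : Finset ℕ) : Prop :=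
  ∃! V, IsSink φ A B V

/-- `φ` is a USO of the face `[A,B]`: every face contained in `[A,B]`
(including `[A,B]` itself) has exactly one sink under `φ`. -/
def IsUSO (φ : Finset ℕ → Finset ℕ) (A B : Finset ℕ) : Prop :=
  A ⊆ B ∧ ∀ A' B' : Finset ℕ, A ⊆ A' → A' ⊆ B' → B' ⊆ B → HasUniqueSink φ A' B'

/-- `φ` is a PUSO of the face `[A,B]`: `[A,B]` does not have exactly one sink
under `φ`, but every proper face contained in `[A,B]` has exactly one sink. -/
def IsPUSO (φ : Finset ℕ → Finset ℕ) (A B : Finset ℕ) : Prop :=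
  A ⊆ B ∧ ¬ HasUniqueSink φ A B ∧
    ∀ A' B' : Finset ℕ, A ⊆ A' → A' ⊆ B' → B' ⊆ B → ¬(A' = A ∧ B' = B) →
      HasUniqueSink φ A' B'

/-- `ψ` is a border USO of the full face of the standard `n`-cube: it is a USO
and there is an outmap `φ` on the standard `(n+1)`-cube that is a PUSO of the
full face and whose restriction to the facet `[∅, {1,…,n}]` agrees with `ψ`. -/
def IsBorderUSO (n : ℕ) (ψ : Finset ℕ → Finset ℕ) : Prop :=
  IsUSO ψ ∅ (Finset.Icc 1 n) ∧
    ∃ φ : Finset ℕ → Finset ℕ, IsPUSO φ ∅ (Finset.Icc 1 (n + 1)) ∧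
      ∀ V : Finset ℕ, V ⊆ Finset.Icc 1 n → φ V ∩ Finset.Icc 1 n = ψ V

/-! ### The pairwise characterization of USOs -/

theorem isSink_iff (φ : Finset ℕ → Finset ℕ) (A B V : Finset ℕ) :
    IsSink φ A B V ↔ A ⊆ V ∧ V ⊆ B ∧ ∀ x ∈ B, x ∉ A → x ∉ φ V := by
  unfold IsSink
  simp only [Finset.ext_iff, mem_inter, mem_sdiff, notMem_empty, iff_false]
  grind

/-- Reversing all edges in one direction `i` preserves the USO property: in a face spanned in
direction `i`, the two facet sinks swap the roles of global sink and non-sink. -/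
theorem IsUSO.flip_one {φ : Finset ℕ → Finset ℕ} {A B : Finset ℕ} (h : IsUSO φ A B) (i : ℕ) :
    IsUSO (fun V => φ V ∆ {i}) A B := by
  refine ⟨h.1, fun A' B' hA hAB hB => ?_⟩
  have key := h.2 A' B' hA hAB hB
  by_cases hi : i ∈ B' ∧ i ∉ A'
  · obtain ⟨hiB, hiA⟩ := hi
    have k0 := h.2 A' (B'.erase i) hA
      (fun x hx => mem_erase.2 ⟨fun e => hiA (e ▸ hx), hAB hx⟩) ((erase_subset _ _).trans hB)
    have k1 := h.2 (insert i A') B' (hA.trans (subset_insert _ _))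
      (insert_subset hiB hAB) hB
    -- `Q w`: the vertex `w` is a sink in all directions of the face other than `i`
    obtain ⟨Q, hQ⟩ : ∃ Q : Finset ℕ → Prop, ∀ w, Q w ↔
        A' ⊆ w ∧ w ⊆ B' ∧ ∀ x ∈ B', x ∉ A' → x ≠ i → x ∉ φ w := ⟨_, fun _ => Iff.rfl⟩
    have s0 : ∀ w, IsSink φ A' (B'.erase i) w ↔ Q w ∧ i ∉ w := by
      intro w
      rw [isSink_iff, hQ, subset_erase]
      simp only [mem_erase]
      grind
    have s1 : ∀ w, IsSink φ (insert i A') B' w ↔ Q w ∧ i ∈ w := by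
      intro w
      rw [isSink_iff, hQ, insert_subset_iff]
      simp only [mem_insert]
      grind
    have s2 : ∀ w, IsSink φ A' B' w ↔ Q w ∧ i ∉ φ w := by
      intro w
      rw [isSink_iff, hQ]
      grind
    have s3 : ∀ w, IsSink (fun V => φ V ∆ {i}) A' B' w ↔ Q w ∧ i ∈ φ w := by
      intro w
      rw [isSink_iff, hQ]
      simp only [mem_symmDiff, mem_singleton]
      grind
    unfold HasUniqueSink at *
    simp only [s0, s1, s2, s3] at *
    clear s0 s1 s2 s3 hQ
    -- exactly two vertices satisfy `Q`, one in each facet, and exactly one of them is a sink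
    obtain ⟨v, hv, hvu⟩ := key
    obtain ⟨v₀, h0, h0u⟩ := k0
    obtain ⟨v₁, h1, h1u⟩ := k1
    by_cases hiv : i ∈ v
    · refine ⟨v₀, ⟨h0.1, ?_⟩, fun w hw => ?_⟩
      · by_contra hc
        have := hvu v₀ ⟨h0.1, hc⟩
        exact h0.2 (this ▸ hiv)
      · refine h0u w ⟨hw.1, fun hiw => ?_⟩
        have : w = v := (h1u w ⟨hw.1, hiw⟩).trans (h1u v ⟨hv.1, hiv⟩).symm
        exact hv.2 (this ▸ hw.2)
    · refine ⟨v₁, ⟨h1.1, ?_⟩, fun w hw => ?_⟩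
      · by_contra hc
        have := hvu v₁ ⟨h1.1, hc⟩
        exact hiv (this ▸ h1.2)
      · refine h1u w ⟨hw.1, by_contra fun hiw => ?_⟩
        have : w = v := (h0u w ⟨hw.1, hiw⟩).trans (h0u v ⟨hv.1, hiv⟩).symm
        exact hv.2 (this ▸ hw.2)
  · unfold HasUniqueSink at *
    simp only [isSink_iff, mem_symmDiff, mem_singleton] at *
    convert key using 6
    grind

theorem IsUSO.flip {φ : Finset ℕ → Finset ℕ} {A B : Finset ℕ} (h : IsUSO φ A B) (T : Finset ℕ) :
    IsUSO (fun V => φ V ∆ T) A B := by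
  induction T using Finset.induction_on with
  | empty => simpa only [← bot_eq_empty, symmDiff_bot] using h
  | insert i T hi ih =>
    have := ih.flip_one i
    have e : insert i T = T ∆ {i} := by
      ext x; simp only [mem_symmDiff, mem_singleton, mem_insert]; grind
    rw [e]
    simpa only [symmDiff_assoc] using this

/-- Every outmap pattern `T` on the carrier of a USO is attained exactly once. -/
theorem IsUSO.existsUnique {φ : Finset ℕ → Finset ℕ} {A B : Finset ℕ} (h : IsUSO φ A B)
    (T : Finset ℕ) :
    ∃! V, A ⊆ V ∧ V ⊆ B ∧ ∀ x ∈ B, x ∉ A → (x ∈ φ V ↔ x ∈ T) := by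
  have := (h.flip T).2 A B subset_rfl h.1 subset_rfl
  unfold HasUniqueSink at this
  simp only [isSink_iff, mem_symmDiff] at this
  convert this using 6
  grind

/-- The pairwise condition of Szabó and Welzl, for one pair of vertices. -/
def Separated (φ : Finset ℕ → Finset ℕ) (U V : Finset ℕ) : Prop :=
  ∃ x ∈ U ∆ V, x ∈ φ U ∆ φ V

/-- Were `U` and `V` not separated, they would have the same outmap pattern on the face they span. -/
theorem separated_of_isUSO {φ : Finset ℕ → Finset ℕ} {U V : Finset ℕ}
    (h : IsUSO φ (U ∩ V) (U ∪ V)) (hne : U ≠ V) : Separated φ U V := by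
  by_contra hs
  refine hne ((h.existsUnique (φ U)).unique ⟨inter_subset_left, subset_union_left, by grind⟩
    ⟨inter_subset_right, subset_union_right, fun x hx hx' => ?_⟩)
  by_contra hc
  refine hs ⟨x, ?_, ?_⟩
  · simp only [mem_symmDiff]; grind
  · simp only [mem_symmDiff]; grind

/-- Separation makes the outmap injective into the subsets of the carrier, and counting makes it
bijective; the sink is the preimage of `∅`. -/
theorem hasUniqueSink_of_separated {φ : Finset ℕ → Finset ℕ} {A B : Finset ℕ} (hAB : A ⊆ B)
    (h : ∀ U V, A ⊆ U → U ⊆ B → A ⊆ V → V ⊆ B → U ≠ V → Separated φ U V) :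
    HasUniqueSink φ A B := by
  have inj : Set.InjOn (fun V => φ V ∩ (B \ A)) (Finset.Icc A B : Finset (Finset ℕ)) := by
    intro U hU V hV e
    simp only [coe_Icc, Set.mem_Icc] at hU hV
    by_contra hne
    obtain ⟨x, hx, hx'⟩ := h U V hU.1 hU.2 hV.1 hV.2 hne
    have := Finset.ext_iff.1 e x
    simp only [mem_symmDiff, mem_inter, mem_sdiff] at *
    grind
  have surj := Finset.surjOn_of_injOn_of_card_le (t := (B \ A).powerset)
    (fun V => φ V ∩ (B \ A)) (fun V _ => by simp) inj
    (by rw [card_powerset, card_Icc_finset hAB, card_sdiff_of_subset hAB])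
  obtain ⟨V, hV, hV'⟩ := surj (by simp : (∅ : Finset ℕ) ∈ _)
  have hVI := hV
  simp only [coe_Icc, Set.mem_Icc] at hV
  refine ⟨V, ⟨hV.1, hV.2, hV'⟩, fun W hW => inj ?_ hVI (hW.2.2.trans hV'.symm)⟩
  simpa using ⟨hW.1, hW.2.1⟩

/-- The Szabó–Welzl characterization of USOs. -/
theorem isUSO_iff {φ : Finset ℕ → Finset ℕ} {M : Finset ℕ} :
    IsUSO φ ∅ M ↔ ∀ U V, U ⊆ M → V ⊆ M → U ≠ V → Separated φ U V := by
  constructor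
  · intro h U V hU hV hne
    refine separated_of_isUSO ⟨inter_subset_left.trans subset_union_left, ?_⟩ hne
    exact fun A' B' _ h2 h3 => h.2 A' B' (empty_subset _) h2 (h3.trans (union_subset hU hV))
  · exact fun h => ⟨empty_subset _, fun A' B' _ h2 h3 => hasUniqueSink_of_separated h2
      fun U V _ hU _ hV => h U V (hU.trans h3) (hV.trans h3)⟩

/-! ### Parity and antipodal symmetry of PUSOs -/

theorem IsPUSO.isUSO {φ : Finset ℕ → Finset ℕ} {A B M : Finset ℕ} (h : IsPUSO φ ∅ M)
    (hAB : A ⊆ B) (hB : B ⊆ M) (hne : ¬ (A = ∅ ∧ B = M)) : IsUSO φ A B := by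
  refine ⟨hAB, fun A' B' h1 h2 h3 => h.2.2 A' B' (empty_subset _) h2 (h3.trans hB) ?_⟩
  rintro ⟨rfl, rfl⟩
  exact hne ⟨subset_empty.1 h1, hB.antisymm h3⟩

theorem IsPUSO.separated {φ : Finset ℕ → Finset ℕ} {M U V : Finset ℕ} (h : IsPUSO φ ∅ M)
    (hU : U ⊆ M) (hV : V ⊆ M) (hne : U ≠ V) (hanti : V ≠ M \ U) : Separated φ U V := by
  refine separated_of_isUSO (h.isUSO (inter_subset_left.trans subset_union_left)
    (union_subset hU hV) ?_) hne
  rintro ⟨h1, h2⟩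
  apply hanti
  ext x
  have := Finset.ext_iff.1 h1 x
  have := Finset.ext_iff.1 h2 x
  simp only [mem_inter, mem_union, mem_sdiff, notMem_empty] at *
  grind

/-- In a PUSO, vertices with the same outmap are equal or antipodal. -/
theorem IsPUSO.eq_or_eq_compl {φ : Finset ℕ → Finset ℕ} {M U V : Finset ℕ} (h : IsPUSO φ ∅ M)
    (hU : U ⊆ M) (hV : V ⊆ M) (e : φ U = φ V) : V = U ∨ V = M \ U := by
  by_contra! hc
  obtain ⟨x, -, hx⟩ := h.separated hU hV hc.1.symm hc.2
  simp [e] at hx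

/-- The outmap value `T` is shared by an antipodal pair of vertices. -/
def Doubled (φ : Finset ℕ → Finset ℕ) (M T : Finset ℕ) : Prop :=
  ∃ U ⊆ M, φ U = T ∧ φ (M \ U) = T

/-- No vertex has outmap value `T`. -/
def Missed (φ : Finset ℕ → Finset ℕ) (M T : Finset ℕ) : Prop :=
  ∀ U ⊆ M, φ U ≠ T

/-- If every antipodal pair were separated, the whole cube would have a unique sink. -/
theorem IsPUSO.exists_doubled {φ : Finset ℕ → Finset ℕ} {M : Finset ℕ} (h : IsPUSO φ ∅ M)
    (hφ : ∀ V, φ V ⊆ M) : ∃ S, Doubled φ M S := by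
  by_contra hc
  refine h.2.1 (hasUniqueSink_of_separated (empty_subset _) fun U V _ hU _ hV hne => ?_)
  by_cases ha : V = M \ U
  · subst ha
    have : φ U ≠ φ (M \ U) := fun e => hc ⟨_, U, hU, rfl, e.symm⟩
    obtain ⟨x, hx⟩ := symmDiff_nonempty.2 this
    refine ⟨x, ?_, hx⟩
    have := @hφ U x
    have := @hφ (M \ U) x
    simp only [mem_symmDiff, mem_sdiff] at *
    grind
  · exact h.separated hU hV hne ha

/-- A vertex with outmap `T ∆ {i}` would share an `i`-facet with one of the two antipodal vertices
of outmap `T`, and would not be separated from it. -/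
theorem IsPUSO.missed_of_doubled {φ : Finset ℕ → Finset ℕ} {M T : Finset ℕ} {i : ℕ}
    (h : IsPUSO φ ∅ M) (hi : i ∈ M) (hT : Doubled φ M T) : Missed φ M (T ∆ {i}) := by
  -- one of the two antipodal vertices lies in the same facet orthogonal to `i` as `V`
  have main : ∀ U V, U ⊆ M → V ⊆ M → (i ∈ U ↔ i ∈ V) → φ U = T → φ V ≠ T ∆ {i} := by
    intro U V hU hV hiUV e1 e2
    have hne : U ≠ V := by
      rintro rfl
      have := Finset.ext_iff.1 (e1.symm.trans e2) i
      simp [mem_symmDiff] at this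
    obtain ⟨x, hx, hx'⟩ := h.separated hU hV hne (by rintro rfl; simp [hi] at hiUV)
    rw [e1, e2] at hx'
    simp only [mem_symmDiff, mem_singleton] at *
    grind
  obtain ⟨U, hU, h1, h2⟩ := hT
  intro V hV
  by_cases hUV : i ∈ U ↔ i ∈ V
  · exact main U V hU hV hUV h1
  · exact main (M \ U) V sdiff_subset hV (by simp only [mem_sdiff]; tauto) h2

/-- Each of the two `i`-facets contains a vertex whose outmap agrees with `T` off `i`; if `T` is not
attained, both have outmap `T ∆ {i}`. -/
theorem IsPUSO.doubled_of_missed {φ : Finset ℕ → Finset ℕ} {M T : Finset ℕ} {i : ℕ}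
    (h : IsPUSO φ ∅ M) (hφ : ∀ V, φ V ⊆ M) (hi : i ∈ M) (hTM : T ⊆ M) (hT : Missed φ M T) :
    Doubled φ M (T ∆ {i}) := by
  have fix : ∀ V ⊆ M, (∀ x ∈ M, x ≠ i → (x ∈ φ V ↔ x ∈ T)) → φ V = T ∆ {i} := by
    intro V hV hx
    have : ¬ (i ∈ φ V ↔ i ∈ T) := by
      intro hi'
      apply hT V hV
      ext x
      have := @hφ V x
      have := @hTM x
      have := hx x
      grind
    ext x
    have := @hφ V x
    have := @hTM x
    have := hx x
    simp only [mem_symmDiff, mem_singleton]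
    grind
  obtain ⟨V, ⟨-, hV, hV'⟩, -⟩ := (h.isUSO (empty_subset (M.erase i)) (erase_subset _ _)
    (fun hc => (erase_ne_self.2 hi) hc.2)).existsUnique T
  obtain ⟨W, ⟨hiW, hW, hW'⟩, -⟩ := (h.isUSO (singleton_subset_iff.2 hi) subset_rfl
    (fun hc => singleton_ne_empty i hc.1)).existsUnique T
  have hVM := hV.trans (erase_subset _ _)
  have eV := fix V hVM (by grind)
  have eW := fix W hW (by grind)
  refine ⟨V, hVM, eV, ?_⟩
  rcases h.eq_or_eq_compl hVM hW (eV.trans eW.symm) with rfl | rfl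
  · have := hV (singleton_subset_iff.1 hiW)
    simp at this
  · exact eW

theorem card_symmDiff_parity (S T : Finset ℕ) :
    Even (S ∆ T).card ↔ (Even S.card ↔ Even T.card) := by
  have e : (S ∆ T).card + 2 * (S ∩ T).card = S.card + T.card := by
    have h1 := card_sdiff_add_card_inter S T
    have h2 := card_sdiff_add_card_inter T S
    have h3 : (S ∆ T).card = (S \ T).card + (T \ S).card :=
      card_union_of_disjoint disjoint_sdiff_sdiff
    rw [inter_comm T S] at h2
    omega
  have := congrArg Even e
  simpa [Nat.even_add] using this

/-- All outmap values have the same parity as a fixed `S`, and each one is shared by an antipodal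
pair: along single-element changes, subsets of `M` alternate between doubled and missed. -/
theorem IsPUSO.parity {φ : Finset ℕ → Finset ℕ} {M : Finset ℕ}
    (h : IsPUSO φ ∅ M) (hφ : ∀ V, φ V ⊆ M) :
    ∃ S, ∀ V ⊆ M, Even (S ∆ φ V).card ∧ Doubled φ M (φ V) := by
  obtain ⟨S, hS⟩ := h.exists_doubled hφ
  have hSM : S ⊆ M := by
    obtain ⟨U, -, rfl, -⟩ := hS
    exact hφ U
  have key : ∀ X : Finset ℕ, X ⊆ M →
      if Even X.card then Doubled φ M (S ∆ X) else Missed φ M (S ∆ X) := by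
    intro X
    induction X using Finset.induction_on with
    | empty =>
      intro _
      rw [card_empty, if_pos Even.zero, ← bot_eq_empty, symmDiff_bot]
      exact hS
    | insert i X hi ih =>
      intro hX
      have hiM := hX (mem_insert_self _ _)
      have hXM := (subset_insert _ _).trans hX
      have e : S ∆ insert i X = (S ∆ X) ∆ {i} := by
        ext x; simp only [mem_symmDiff, mem_singleton, mem_insert]; grind
      have ih := ih hXM
      rw [card_insert_of_notMem hi, e]
      by_cases hp : Even X.card
      · rw [if_pos hp] at ih
        rw [if_neg (by simpa [Nat.even_add_one] using hp)]
        exact h.missed_of_doubled hiM ih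
      · rw [if_neg hp] at ih
        rw [if_pos (by simpa [Nat.even_add_one] using hp)]
        exact h.doubled_of_missed hφ hiM
          (symmDiff_le (le_sup_of_le_right hSM) (le_sup_of_le_right hXM)) ih
  refine ⟨S, fun V hV => ?_⟩
  have := key (S ∆ φ V) (symmDiff_le (le_sup_of_le_right hSM) (le_sup_of_le_right (hφ V)))
  rw [symmDiff_symmDiff_cancel_left] at this
  split_ifs at this with hp
  · exact ⟨hp, this⟩
  · exact absurd rfl (this V hV)

theorem IsPUSO.antipodal {φ : Finset ℕ → Finset ℕ} {M V : Finset ℕ}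
    (h : IsPUSO φ ∅ M) (hφ : ∀ V, φ V ⊆ M) (hV : V ⊆ M) : φ (M \ V) = φ V := by
  obtain ⟨S, hS⟩ := h.parity hφ
  obtain ⟨U, hU, h1, h2⟩ := (hS V hV).2
  rcases h.eq_or_eq_compl hU hV h1 with rfl | rfl
  · exact h2
  · rw [Finset.sdiff_sdiff_eq_self hU, h1]

theorem IsPUSO.even_symmDiff {φ : Finset ℕ → Finset ℕ} {M U V : Finset ℕ}
    (h : IsPUSO φ ∅ M) (hφ : ∀ V, φ V ⊆ M) (hU : U ⊆ M) (hV : V ⊆ M) :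
    Even (φ U ∆ φ V).card := by
  obtain ⟨S, hS⟩ := h.parity hφ
  have h1 := (hS U hU).1
  have h2 := (hS V hV).1
  rw [card_symmDiff_parity] at *
  tauto

/-- Coordinates of the outmap outside the cube are irrelevant. -/
theorem IsPUSO.inter {φ : Finset ℕ → Finset ℕ} {M : Finset ℕ} (h : IsPUSO φ ∅ M) :
    IsPUSO (fun V => φ V ∩ M) ∅ M := by
  have key : ∀ A B, B ⊆ M → (HasUniqueSink (fun V => φ V ∩ M) A B ↔ HasUniqueSink φ A B) := by
    intro A B hB
    unfold HasUniqueSink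
    simp only [isSink_iff, mem_inter]
    apply existsUnique_congr
    grind
  refine ⟨h.1, (key _ _ subset_rfl).not.2 h.2.1, fun A B h1 h2 h3 h4 => ?_⟩
  exact (key A B h3).2 (h.2.2 A B h1 h2 h3 h4)

/-! ### Border USOs -/

/-- The candidate PUSO on `insert m N`: a vertex of the facet `[∅, N]` keeps its outmap, with `m`
added when needed to make its size even; a vertex containing `m` copies its antipode. -/
def evenExt (N : Finset ℕ) (m : ℕ) (ψ : Finset ℕ → Finset ℕ) (V : Finset ℕ) : Finset ℕ :=
  let W := if m ∈ V then N \ V else V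
  if Even (ψ W).card then ψ W else insert m (ψ W)

/-- Characterization of border USOs: the pairwise condition for the PUSO on `insert m N`, read off
for a vertex `U` of `[∅, N]` and the antipode of another vertex `V` of `[∅, N]`. -/
theorem border_iff {N : Finset ℕ} {m : ℕ} {ψ : Finset ℕ → Finset ℕ} (hm : m ∉ N)
    (hψN : ∀ V ⊆ N, ψ V ⊆ N) (hψ : IsUSO ψ ∅ N) :
    (∃ φ : Finset ℕ → Finset ℕ, IsPUSO φ ∅ (insert m N) ∧ ∀ V ⊆ N, φ V ∩ N = ψ V) ↔
      ∀ U V, U ⊆ N → V ⊆ N → U ≠ V → ψ U ∆ ψ V ⊆ U ∆ V → Odd (ψ U ∆ ψ V).card := by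
  constructor
  · rintro ⟨φ₀, h₀, hr₀⟩ U V hU hV hne hsub
    obtain ⟨φ, h, hφ, hr⟩ : ∃ φ : Finset ℕ → Finset ℕ, IsPUSO φ ∅ (insert m N) ∧
        (∀ V, φ V ⊆ insert m N) ∧ ∀ V ⊆ N, φ V ∩ N = ψ V :=
      ⟨_, h₀.inter, fun V => inter_subset_right, fun V hV => by
        rw [← hr₀ V hV, inter_assoc, inter_eq_right.2 (subset_insert _ _)]⟩
    by_contra hodd
    rw [Nat.not_odd_iff_even] at hodd
    have hUM := hU.trans (subset_insert m N)
    have hVM := hV.trans (subset_insert m N)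
    have heven := h.even_symmDiff hφ hUM hVM
    have hN : (φ U ∆ φ V).erase m = ψ U ∆ ψ V := by
      rw [← hr U hU, ← hr V hV]
      ext x
      have := @hφ U x
      have := @hφ V x
      simp only [mem_erase, mem_symmDiff, mem_inter, mem_insert] at *
      grind
    -- both sizes are even, so `m` does not occur in the difference
    have hmn : m ∉ φ U ∆ φ V := by
      intro hc
      have := card_erase_add_one hc
      rw [hN] at this
      rw [← this, Nat.even_add_one] at heven
      exact heven hodd
    rw [erase_eq_of_notMem hmn] at hN
    obtain ⟨x, hx, hx'⟩ := h.separated (V := insert m N \ V) hUM sdiff_subset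
      (fun e => by have := Finset.ext_iff.1 e m; simp at this; grind)
      (fun e => hne (by
        rw [← Finset.sdiff_sdiff_eq_self hUM, ← e, Finset.sdiff_sdiff_eq_self hVM]))
    rw [h.antipodal hφ hVM, hN] at hx'
    have := hsub hx'
    have : x ∈ insert m N := by
      simp only [mem_symmDiff] at this
      grind
    simp only [mem_symmDiff, mem_sdiff] at *
    grind
  · intro hodd
    have low : ∀ V ⊆ N, evenExt N m ψ V =
        if Even (ψ V).card then ψ V else insert m (ψ V) := by
      intro V hV
      have : m ∉ V := fun hc => hm (hV hc)
      simp [evenExt, this]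
    have up : ∀ V ⊆ N, evenExt N m ψ (insert m N \ V) = evenExt N m ψ V := by
      intro V hV
      have h1 : m ∉ V := fun hc => hm (hV hc)
      have h2 : N \ (insert m N \ V) = V := by
        ext x
        have := @hV x
        simp only [mem_sdiff, mem_insert]
        grind
      simp [evenExt, h1, h2]
    have memN : ∀ V ⊆ N, ∀ x ≠ m, (x ∈ evenExt N m ψ V ↔ x ∈ ψ V) := by
      intro V hV x hx
      rw [low V hV]
      split_ifs <;> simp [hx]
    have memm : ∀ V ⊆ N, (m ∈ evenExt N m ψ V ↔ ¬ Even (ψ V).card) := by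
      intro V hV
      have : m ∉ ψ V := fun hc => hm (hψN V hV hc)
      rw [low V hV]
      split_ifs with hp <;> simp [hp, this]
    -- every vertex is a vertex of `[∅, N]` or antipodal to one
    have cases : ∀ V ⊆ insert m N, V ⊆ N ∨ ∃ W ⊆ N, V = insert m N \ W := by
      intro V hV
      by_cases hmV : m ∈ V
      · refine .inr ⟨insert m N \ V, by grind, (Finset.sdiff_sdiff_eq_self hV).symm⟩
      · exact .inl (by grind)
    have anti : ∀ V ⊆ insert m N, evenExt N m ψ (insert m N \ V) = evenExt N m ψ V := by
      intro V hV
      obtain hV' | ⟨W, hW, rfl⟩ := cases V hV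
      · exact up V hV'
      · rw [Finset.sdiff_sdiff_eq_self (hW.trans (subset_insert _ _)), up W hW]
    have sepll : ∀ U V, U ⊆ N → V ⊆ N → U ≠ V → Separated (evenExt N m ψ) U V := by
      intro U V hU hV hne
      obtain ⟨x, hx, hx'⟩ := isUSO_iff.1 hψ U V hU hV hne
      refine ⟨x, hx, ?_⟩
      have hxm : x ≠ m := by
        rintro rfl
        simp only [mem_symmDiff] at hx
        grind
      simpa only [mem_symmDiff, memN U hU x hxm, memN V hV x hxm] using hx'
    have seplu : ∀ U V, U ⊆ N → V ⊆ N → U ≠ V →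
        Separated (evenExt N m ψ) U (insert m N \ V) := by
      intro U V hU hV hne
      unfold Separated
      rw [up V hV]
      by_cases hsub : ψ U ∆ ψ V ⊆ U ∆ V
      · refine ⟨m, ?_, ?_⟩
        · simp only [mem_symmDiff, mem_sdiff, mem_insert]
          grind
        · have := hodd U V hU hV hne hsub
          rw [← Nat.not_even_iff_odd, card_symmDiff_parity] at this
          simp only [mem_symmDiff, memm U hU, memm V hV]
          tauto
      · obtain ⟨x, hx, hx'⟩ := not_subset.1 hsub
        have hxN : x ∈ N := by
          have := @hψN U hU x
          have := @hψN V hV x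
          simp only [mem_symmDiff] at hx
          grind
        have hxm : x ≠ m := fun e => hm (e ▸ hxN)
        refine ⟨x, ?_, ?_⟩
        · simp only [mem_symmDiff, mem_sdiff, mem_insert] at *
          grind
        · simpa only [mem_symmDiff, memN U hU x hxm, memN V hV x hxm] using hx
    have symm : ∀ U V, Separated (evenExt N m ψ) U V → Separated (evenExt N m ψ) V U := by
      rintro U V ⟨x, h1, h2⟩
      exact ⟨x, symmDiff_comm U V ▸ h1, symmDiff_comm (evenExt N m ψ U) _ ▸ h2⟩
    have sep : ∀ U V, U ⊆ insert m N → V ⊆ insert m N → U ≠ V → V ≠ insert m N \ U →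
        Separated (evenExt N m ψ) U V := by
      intro U V hU hV hne ha
      obtain hU' | ⟨U', hU', rfl⟩ := cases U hU <;> obtain hV' | ⟨V', hV', rfl⟩ := cases V hV
      · exact sepll U V hU' hV' hne
      · exact seplu U V' hU' hV' (fun e => ha (e ▸ rfl))
      · refine symm _ _ (seplu V U' hV' hU' (fun e => ha ?_))
        rw [e, Finset.sdiff_sdiff_eq_self (hU'.trans (subset_insert _ _))]
      · obtain ⟨x, hx, hx'⟩ := sepll U' V' hU' hV' (fun e => hne (e ▸ rfl))
        refine ⟨x, ?_, ?_⟩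
        · have := @hU' x
          have := @hV' x
          simp only [mem_symmDiff, mem_sdiff, mem_insert] at *
          grind
        · rwa [up U' hU', up V' hV']
    refine ⟨evenExt N m ψ, ⟨empty_subset _, ?_, ?_⟩, ?_⟩
    · -- sinks come in antipodal pairs
      rintro ⟨V, hV, hVu⟩
      have := hVu (insert m N \ V) ⟨empty_subset _, sdiff_subset, by
        rw [anti V hV.2.1]; exact hV.2.2⟩
      have := Finset.ext_iff.1 this m
      simp at this
    · intro A B _ hAB hB hne
      refine hasUniqueSink_of_separated hAB fun U V hAU hUB hAV hVB hUV =>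
        sep U V (hUB.trans hB) (hVB.trans hB) hUV ?_
      rintro rfl
      apply hne
      constructor
      · ext x
        have := @hAU x
        have := @hAV x
        simp only [mem_sdiff, notMem_empty] at *
        grind
      · apply hB.antisymm
        intro x hx
        have := @hUB x
        have := @hVB x
        simp only [mem_sdiff] at *
        grind
    · intro V hV
      ext x
      rw [mem_inter]
      have := memN V hV x
      have := @hψN V hV x
      grind

/-- Odd USO characterization: for a bijective USO `φ` of the full face of the
standard `n`-cube (with two-sided inverse `φinv`), the inverse is a border USO
iff for all distinct vertices `U, V`, `U ∆ V ⊆ φ U ∆ φ V` implies that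
`|U ∆ V|` is odd. -/
theorem odd_uso_characterization (n : ℕ) (φ φinv : Finset ℕ → Finset ℕ)
    (hmap : ∀ V : Finset ℕ, V ⊆ Finset.Icc 1 n → φ V ⊆ Finset.Icc 1 n)
    (hmapinv : ∀ V : Finset ℕ, V ⊆ Finset.Icc 1 n → φinv V ⊆ Finset.Icc 1 n)
    (hleft : ∀ V : Finset ℕ, V ⊆ Finset.Icc 1 n → φinv (φ V) = V)
    (hright : ∀ V : Finset ℕ, V ⊆ Finset.Icc 1 n → φ (φinv V) = V)
    (hφ : IsUSO φ ∅ (Finset.Icc 1 n)) :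
    IsBorderUSO n φinv ↔
      ∀ U V : Finset ℕ, U ⊆ Finset.Icc 1 n → V ⊆ Finset.Icc 1 n → U ≠ V →
        U ∆ V ⊆ φ U ∆ φ V → Odd (U ∆ V).card := by
  -- the pairwise condition is symmetric in a vertex and its outmap value
  have hinv : IsUSO φinv ∅ (Finset.Icc 1 n) := by
    refine isUSO_iff.2 fun U V hU hV hne => ?_
    obtain ⟨x, h1, h2⟩ := isUSO_iff.1 hφ (φinv U) (φinv V) (hmapinv U hU) (hmapinv V hV)
      (fun e => hne (by rw [← hright U hU, e, hright V hV]))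
    rw [hright U hU, hright V hV] at h2
    exact ⟨x, h2, h1⟩
  have hins : Finset.Icc 1 (n + 1) = insert (n + 1) (Finset.Icc 1 n) := by
    ext x; simp only [mem_Icc, mem_insert]; omega
  unfold IsBorderUSO
  rw [and_iff_right hinv, hins, border_iff (by simp) hmapinv hinv]
  constructor
  · intro h U V hU hV hne hsub
    have := h (φ U) (φ V) (hmap U hU) (hmap V hV)
      (fun e => hne (by rw [← hleft U hU, e, hleft V hV]))
    rw [hleft U hU, hleft V hV] at this
    exact this hsub
  · intro h U V hU hV hne hsub
    refine h (φinv U) (φinv V) (hmapinv U hU) (hmapinv V hV)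
      (fun e => hne (by rw [← hright U hU, e, hright V hV])) ?_
    rwa [hright U hU, hright V hV]
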